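/- Let G be a connected graph of order m ≥ 3 and let n ≥ 1 with m ≡ n (mod 2), and suppose χ(G) = χ_la(G). If n ≥ m, then χ_la(G ∨ O_n) = χ_la(G) + 1. -/

import Mathlib

open scoped BigOperators

/-- The induced vertex sum: sum of labels of edges incident to `v`. -/
noncomputable def vertexSum {V : Type*} (G : SimpleGraph V) (f : Sym2 V → ℕ) (v : V) : ℕ :=
  ∑ᶠ e ∈ G.incidenceSet v, f e

/-- `f` is a local antimagic labeling of `G`: a bijection from the edge set onto
`{1, …, |E(G)|}` such that adjacent vertices get distinct induced sums. -/
def IsLocalAntimagic {V : Type*} (G : SimpleGraph V) (f : Sym2 V → ℕ) : Prop :=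
  Set.BijOn f G.edgeSet (Set.Icc 1 G.edgeSet.ncard) ∧
  ∀ u v, G.Adj u v → vertexSum G f u ≠ vertexSum G f v

/-- Number of distinct induced vertex labels of the labeling `f`. -/
noncomputable def colorCount {V : Type*} (G : SimpleGraph V) (f : Sym2 V → ℕ) : ℕ :=
  (Set.range (vertexSum G f)).ncard

/-- The local antimagic chromatic number. -/
noncomputable def chiLA {V : Type*} (G : SimpleGraph V) : ℕ :=
  sInf { n | ∃ f, IsLocalAntimagic G f ∧ colorCount G f = n }

/-- The join `G ∨ Oₙ` of `G` with the empty graph on `n` vertices. -/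
def joinEmpty {V : Type*} (G : SimpleGraph V) (n : ℕ) : SimpleGraph (V ⊕ Fin n) :=
  SimpleGraph.fromRel (fun x y =>
    (∃ a b, x = Sum.inl a ∧ y = Sum.inl b ∧ G.Adj a b) ∨ (x.isLeft ∧ y.isRight))

/-- An `m × n` integer array with distinct entries, zero row and column sums, absolute values in `S`. -/
def HasRect (m n : ℕ) (S : Set ℕ) : Prop :=
  ∃ M : Fin m → Fin n → ℤ,
    (∀ i j i' j', M i j = M i' j' → i = i' ∧ j = j') ∧
    (∀ i, ∑ j, M i j = 0) ∧ (∀ j, ∑ i, M i j = 0) ∧ ∀ i j, (M i j).natAbs ∈ S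

theorem HasRect.transpose {m n : ℕ} {S : Set ℕ} (h : HasRect m n S) : HasRect n m S := by
  obtain ⟨M, h1, h2, h3, h4⟩ := h
  exact ⟨fun i j => M j i, fun i j i' j' e => (h1 _ _ _ _ e).symm, h3, h2, fun i j => h4 j i⟩

theorem HasRect.mono {m n : ℕ} {S T : Set ℕ} (h : HasRect m n S) (hST : S ⊆ T) : HasRect m n T := by
  obtain ⟨M, h1, h2, h3, h4⟩ := h
  exact ⟨M, h1, h2, h3, fun i j => hST (h4 i j)⟩

theorem HasRect.zero_right (m : ℕ) (S : Set ℕ) : HasRect m 0 S :=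
  ⟨fun _ _ => 0, fun _ j => j.elim0, fun _ => by simp, fun j => j.elim0, fun _ j => j.elim0⟩

theorem HasRect.hglue {m n n' : ℕ} {S T : Set ℕ} (h : HasRect m n S) (h' : HasRect m n' T)
    (hd : ∀ x ∈ S, x ∉ T) : HasRect m (n + n') (S ∪ T) := by
  obtain ⟨M, h1, h2, h3, h4⟩ := h
  obtain ⟨M', h1', h2', h3', h4'⟩ := h'
  refine ⟨fun i => Fin.append (M i) (M' i), ?_, ?_, ?_, ?_⟩
  · intro i j i' j'
    refine Fin.addCases (fun a => ?_) (fun a => ?_) j <;>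
      refine Fin.addCases (fun b => ?_) (fun b => ?_) j' <;>
      simp only [Fin.append_left, Fin.append_right] <;> intro e
    · obtain ⟨r, rfl⟩ := h1 _ _ _ _ e
      exact ⟨r, rfl⟩
    · exact absurd (e ▸ h4' i' b) (hd _ (h4 i a))
    · exact absurd (e.symm ▸ h4' i a) (hd _ (h4 i' b))
    · obtain ⟨r, rfl⟩ := h1' _ _ _ _ e
      exact ⟨r, rfl⟩
  · intro i
    rw [Fin.sum_univ_add]
    simp [h2, h2']
  · intro j
    refine Fin.addCases (fun a => ?_) (fun a => ?_) j
    · simpa using h3 a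
    · simpa using h3' a
  · intro i j
    refine Fin.addCases (fun a => ?_) (fun a => ?_) j
    · simpa using Or.inl (h4 i a)
    · simpa using Or.inr (h4' i a)

theorem HasRect.vglue {m m' n : ℕ} {S T : Set ℕ} (h : HasRect m n S) (h' : HasRect m' n T)
    (hd : ∀ x ∈ S, x ∉ T) : HasRect (m + m') n (S ∪ T) :=
  (h.transpose.hglue h'.transpose hd).transpose

/-- The values `s * x + c` for `a ≤ x < b`. -/
def Prog (s c a b : ℕ) : Set ℕ := {v | ∃ x, a ≤ x ∧ x < b ∧ v = s * x + c}

theorem Prog.union (s c a b d : ℕ) (h1 : a ≤ b) (h2 : b ≤ d) :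
    Prog s c a b ∪ Prog s c b d ⊆ Prog s c a d := by
  rintro v (⟨x, hx, hx', rfl⟩ | ⟨x, hx, hx', rfl⟩)
  · exact ⟨x, hx, by omega, rfl⟩
  · exact ⟨x, by omega, by omega, rfl⟩

theorem Prog.disj (s c a b d : ℕ) (hs : 0 < s) :
    ∀ x ∈ Prog s c a b, x ∉ Prog s c b d := by
  rintro v ⟨x, hx, hx', rfl⟩ ⟨y, hy, hy', e⟩
  have : s * x = s * y := by omega
  have := Nat.eq_of_mul_eq_mul_left hs this
  omega

theorem quad_block (s c a : ℕ) (hs : 0 < s) (hp : 0 < s * a + c) :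
    HasRect 2 4 (Prog s c a (a + 4)) := by
  set p : ℤ := s * a + c with hpdef
  have hp' : 0 < p := by rw [hpdef]; exact_mod_cast hp
  have hs' : (0 : ℤ) < s := by exact_mod_cast hs
  refine ⟨![![p, -(p + s), -(p + 2 * s), p + 3 * s], ![-p, p + s, p + 2 * s, -(p + 3 * s)]],
    ?_, ?_, ?_, ?_⟩
  · intro i j i' j'
    fin_cases i <;> fin_cases i' <;> fin_cases j <;> fin_cases j' <;> simp <;> omega
  · intro i
    fin_cases i <;> simp [Fin.sum_univ_four] <;> ring
  · intro j
    fin_cases j <;> simp [Fin.sum_univ_two]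
  · have key : ∀ t : ℕ, t < 4 → (p + t * s).natAbs ∈ Prog s c a (a + 4) := by
      intro t ht
      refine ⟨a + t, by omega, by omega, ?_⟩
      have : p + t * s = ((s * (a + t) + c : ℕ) : ℤ) := by rw [hpdef]; push_cast; ring
      rw [this, Int.natAbs_natCast]
    have k0 := key 0 (by norm_num)
    have k1 := key 1 (by norm_num)
    have k2 := key 2 (by norm_num)
    have k3 := key 3 (by norm_num)
    simp only [Nat.cast_zero, Nat.cast_one, Nat.cast_ofNat, zero_mul, one_mul, add_zero] at k0 k1 k2 k3
    intro i j
    fin_cases i <;> fin_cases j <;>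
      first
        | exact k0
        | exact k1
        | exact k2
        | exact k3
        | (rw [← Int.natAbs_neg] at k0; exact k0)
        | (rw [← Int.natAbs_neg] at k1; exact k1)
        | (rw [← Int.natAbs_neg] at k2; exact k2)
        | (rw [← Int.natAbs_neg] at k3; exact k3)

theorem quad_row (s c a r : ℕ) (hs : 0 < s) (hp : 0 < s * a + c) :
    HasRect 2 (4 * r) (Prog s c a (a + 4 * r)) := by
  induction r with
  | zero => exact HasRect.zero_right _ _
  | succ r ih =>
    have h := quad_block s c (a + 4 * r) hs (by rw [mul_add]; omega)
    exact (ih.hglue h (Prog.disj _ _ _ _ _ hs)).mono (Prog.union _ _ _ _ _ (by omega) (by omega))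

theorem quad_rect (s c a q r : ℕ) (hs : 0 < s) (hp : 0 < s * a + c) :
    HasRect (2 * q) (4 * r) (Prog s c a (a + q * (4 * r))) := by
  induction q with
  | zero => exact (HasRect.zero_right _ _).transpose
  | succ q ih =>
    have h := quad_row s c (a + q * (4 * r)) r hs (by rw [mul_add]; omega)
    refine (ih.vglue h (Prog.disj _ _ _ _ _ hs)).mono ?_
    have : a + (q + 1) * (4 * r) = a + q * (4 * r) + 4 * r := by ring
    rw [this]
    exact Prog.union _ _ _ _ _ (by omega) (by omega)

/-- `p × w` arrays on consecutive values, for `p`, `w` even and one of them divisible by four. -/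
theorem quad_any (s c a p w : ℕ) (hs : 0 < s) (hp : 0 < s * a + c)
    (h : (p % 2 = 0 ∧ w % 4 = 0) ∨ (p % 4 = 0 ∧ w % 2 = 0)) :
    HasRect p w (Prog s c a (a + p * w / 2)) := by
  rcases h with ⟨h1, h2⟩ | ⟨h1, h2⟩
  · obtain ⟨q, rfl⟩ : ∃ q, p = 2 * q := ⟨p / 2, by omega⟩
    obtain ⟨r, rfl⟩ : ∃ r, w = 4 * r := ⟨w / 4, by omega⟩
    have : 2 * q * (4 * r) / 2 = q * (4 * r) := by rw [mul_assoc]; omega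
    rw [this]
    exact quad_rect s c a q r hs hp
  · obtain ⟨q, rfl⟩ : ∃ q, w = 2 * q := ⟨w / 2, by omega⟩
    obtain ⟨r, rfl⟩ : ∃ r, p = 4 * r := ⟨p / 4, by omega⟩
    have : 4 * r * (2 * q) / 2 = q * (4 * r) := by
      rw [show 4 * r * (2 * q) = 2 * (q * (4 * r)) by ring]; omega
    rw [this]
    exact (quad_rect s c a q r hs hp).transpose

theorem six_block : HasRect 2 6 (Prog 2 1 0 6) := by
  refine ⟨![![1, 3, 5, 9, -7, -11], ![-1, -3, -5, -9, 7, 11]], by decide, by decide, by decide, ?_⟩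
  have : ∀ i j, ∃ x : Fin 6, ((![![1, 3, 5, 9, -7, -11], ![-1, -3, -5, -9, 7, 11]] :
      Fin 2 → Fin 6 → ℤ) i j).natAbs = 2 * x.val + 1 := by decide
  intro i j
  obtain ⟨x, hx⟩ := this i j
  exact ⟨x, by omega, x.2, hx⟩

theorem even_rect (m n : ℕ) (hm : m % 2 = 0) (hn : n % 2 = 0) (hm3 : 3 ≤ m) (hn3 : 3 ≤ n) :
    HasRect m n (Prog 2 1 0 (m * n / 2)) := by
  by_cases h : n % 4 = 0 ∨ m % 4 = 0
  · have := quad_any 2 1 0 m n (by norm_num) (by norm_num) (by omega)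
    simpa using this
  · obtain ⟨p, rfl⟩ : ∃ p, m = 2 + 4 * p := ⟨m / 4, by omega⟩
    obtain ⟨q, rfl⟩ : ∃ q, n = 6 + 4 * q := ⟨n / 4 - 1, by omega⟩
    have h1 := quad_any 2 1 6 2 (4 * q) (by norm_num) (by norm_num) (by omega)
    have h2 := (six_block.hglue h1 (Prog.disj _ _ _ _ _ (by norm_num))).mono
      (Prog.union _ _ _ _ _ (by omega) (by omega))
    have h3 := quad_any 2 1 (6 + 2 * (4 * q) / 2) (4 * p) (6 + 4 * q) (by norm_num) (by norm_num)
      (by omega)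
    have h4 := (h2.vglue h3 (Prog.disj _ _ _ _ _ (by norm_num))).mono
      (Prog.union _ _ _ _ _ (by omega) (by omega))
    convert h4 using 2
    have e1 : (2 + 4 * p) * (6 + 4 * q) = 2 * (6 + 4 * q + 2 * p * (6 + 4 * q)) := by ring
    have e2 : 4 * p * (6 + 4 * q) = 2 * (2 * p * (6 + 4 * q)) := by ring
    rw [e1, e2]
    omega

/-- The triple `x, y, x + y` attached to the index `d`. -/
def trip (a b : ℕ → ℕ) (d : ℕ) : Set ℕ := {v | v = a d ∨ v = b d ∨ v = a d + b d}

theorem triple_block (x y : ℕ) (hx : 0 < x) (hy : 0 < y) (hxy : x ≠ y) :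
    HasRect 3 2 {v | v = x ∨ v = y ∨ v = x + y} := by
  refine ⟨![![(x : ℤ), -x], ![(y : ℤ), -y], ![-(x + y : ℤ), x + y]], ?_, ?_, ?_, ?_⟩
  · intro i j i' j'
    fin_cases i <;> fin_cases i' <;> fin_cases j <;> fin_cases j' <;> simp <;> omega
  · intro i
    fin_cases i <;> simp [Fin.sum_univ_two]
  · intro j
    fin_cases j <;> simp [Fin.sum_univ_three]
    ring
  · intro i j
    fin_cases i <;> fin_cases j <;> simp <;> omega

theorem triple_strip (a b : ℕ → ℕ) (D : Finset ℕ)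
    (hpos : ∀ d ∈ D, 0 < a d ∧ 0 < b d ∧ a d ≠ b d)
    (hdisj : ∀ d ∈ D, ∀ d' ∈ D, d ≠ d' → ∀ x ∈ trip a b d, x ∉ trip a b d') :
    HasRect 3 (2 * D.card) {v | ∃ d ∈ D, v ∈ trip a b d} := by
  induction D using Finset.induction_on with
  | empty => exact HasRect.zero_right _ _
  | insert e D he ih =>
    have h1 := ih (fun d hd => hpos d (Finset.mem_insert_of_mem hd))
      (fun d hd d' hd' => hdisj d (Finset.mem_insert_of_mem hd) d' (Finset.mem_insert_of_mem hd'))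
    obtain ⟨p1, p2, p3⟩ := hpos e (Finset.mem_insert_self _ _)
    have h2 : HasRect 3 2 (trip a b e) := triple_block (a e) (b e) p1 p2 p3
    have h3 := h1.hglue h2 (by
      rintro x ⟨d, hd, hx⟩
      exact hdisj d (Finset.mem_insert_of_mem hd) e (Finset.mem_insert_self _ _)
        (fun h => he (h ▸ hd)) x hx)
    rw [Finset.card_insert_of_notMem he, mul_add, mul_one]
    refine h3.mono ?_
    rintro x (⟨d, hd, hx⟩ | hx)
    · exact ⟨d, Finset.mem_insert_of_mem hd, hx⟩
    · exact ⟨e, Finset.mem_insert_self _ _, hx⟩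

/-- Split the triples in two families: a `3 × 2p` strip and a `2q × 3` strip. -/
theorem triple_split (a b : ℕ → ℕ) (D : Finset ℕ) (p q : ℕ) (hc : D.card = p + q)
    (hpos : ∀ d ∈ D, 0 < a d ∧ 0 < b d ∧ a d ≠ b d)
    (hdisj : ∀ d ∈ D, ∀ d' ∈ D, d ≠ d' → ∀ x ∈ trip a b d, x ∉ trip a b d') :
    ∃ S T : Set ℕ, HasRect 3 (2 * p) S ∧ HasRect (2 * q) 3 T ∧ (∀ x ∈ S, x ∉ T) ∧
      (∀ x ∈ S, ∃ d ∈ D, x ∈ trip a b d) ∧ (∀ x ∈ T, ∃ d ∈ D, x ∈ trip a b d) := by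
  obtain ⟨E, hE, hEc⟩ := Finset.exists_subset_card_eq (s := D) (n := p) (by omega)
  have hF : (D \ E).card = q := by rw [Finset.card_sdiff_of_subset hE]; omega
  have h1 := triple_strip a b E (fun d hd => hpos d (hE hd))
    (fun d hd d' hd' => hdisj d (hE hd) d' (hE hd'))
  have hs : D \ E ⊆ D := Finset.sdiff_subset
  have h2 := triple_strip a b (D \ E) (fun d hd => hpos d (hs hd))
    (fun d hd d' hd' => hdisj d (hs hd) d' (hs hd'))
  rw [hEc] at h1
  rw [hF] at h2
  refine ⟨_, _, h1, h2.transpose, ?_, ?_, ?_⟩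
  · rintro x ⟨d, hd, hx⟩ ⟨d', hd', hx'⟩
    refine hdisj d (hE hd) d' (hs hd') ?_ x hx hx'
    rintro rfl
    exact (Finset.mem_sdiff.1 hd').2 hd
  · rintro x ⟨d, hd, hx⟩
    exact ⟨d, hE hd, hx⟩
  · rintro x ⟨d, hd, hx⟩
    exact ⟨d, hs hd, hx⟩

theorem trip_lt {a b : ℕ → ℕ} {d N x : ℕ} (h : a d + b d < N) (hx : x ∈ trip a b d) : x < N := by
  rcases hx with h | h | h <;> omega

theorem assemble (m n r N : ℕ) (S0 : Set ℕ) (D : Finset ℕ) (a b : ℕ → ℕ)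
    (hm : m % 2 = 1) (hn : n % 2 = 1) (hm3 : 3 ≤ m) (hn3 : 3 ≤ n) (hr : r % 2 = 1) (hrn : r ≤ n)
    (h4 : m % 4 = 3 ∨ n % 4 = 3)
    (hcore : HasRect 3 r S0) (hS0 : ∀ x ∈ S0, x < N)
    (hpos : ∀ d ∈ D, 0 < a d ∧ 0 < b d ∧ a d ≠ b d) (hlt : ∀ d ∈ D, a d + b d < N)
    (hdisj : ∀ d ∈ D, ∀ d' ∈ D, d ≠ d' → ∀ x ∈ trip a b d, x ∉ trip a b d')
    (hcd : ∀ d ∈ D, ∀ x ∈ trip a b d, x ∉ S0)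
    (hcard : 2 * D.card + r + 3 = m + n) (hN : 2 * N + 8 = 3 * (m + n)) :
    HasRect m n {x | 2 * x + 1 ≤ m * n} := by
  obtain ⟨q, rfl⟩ : ∃ q, m = 3 + 2 * q := ⟨(m - 3) / 2, by omega⟩
  obtain ⟨p, rfl⟩ : ∃ p, n = r + 2 * p := ⟨(n - r) / 2, by omega⟩
  obtain ⟨w, hw⟩ : ∃ w, r + 2 * p = 3 + w := ⟨r + 2 * p - 3, by omega⟩
  obtain ⟨S, T, hS, hT, hST, hSD, hTD⟩ := triple_split a b D p q (by omega) hpos hdisj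
  have hSN : ∀ x ∈ S, x < N := fun x hx => by
    obtain ⟨d, hd, h⟩ := hSD x hx
    exact trip_lt (hlt d hd) h
  have hTN : ∀ x ∈ T, x < N := fun x hx => by
    obtain ⟨d, hd, h⟩ := hTD x hx
    exact trip_lt (hlt d hd) h
  have hQ := quad_any 1 0 N (2 * q) w (by norm_num) (by omega) (by omega)
  have h1 := hcore.hglue hS (fun x hx hx' => by
    obtain ⟨d, hd, h⟩ := hSD x hx'
    exact hcd d hd x h hx)
  have h2 := hT.hglue hQ (by
    rintro x hx ⟨y, hy, hy', rfl⟩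
    have := hTN _ hx
    omega)
  rw [← hw] at h2
  have h3 := h1.vglue h2 (by
    rintro x hx (hx' | ⟨y, hy, hy', rfl⟩)
    · rcases hx with hx | hx
      · obtain ⟨d, hd, h⟩ := hTD x hx'
        exact hcd d hd x h hx
      · exact hST x hx hx'
    · rcases hx with hx | hx
      · have := hS0 _ hx
        omega
      · have := hSN _ hx
        omega)
  have e : (3 + 2 * q) * (r + 2 * p) + 1 = 2 * N + 2 * (q * w) := by
    rw [hw]
    have : 2 * N + 8 = 3 * (3 + 2 * q + (3 + w)) := by omega
    nlinarith
  have e2 : 2 * q * w / 2 = q * w := by rw [mul_assoc]; omega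
  refine h3.mono ?_
  have key : ∀ x, x < N + q * w → 2 * x + 1 ≤ (3 + 2 * q) * (r + 2 * p) := by
    intro x hx
    omega
  rintro x ((hx | hx) | (hx | ⟨y, hy, hy', rfl⟩))
  · exact key x (by have := hS0 _ hx; omega)
  · exact key x (by have := hSN _ hx; omega)
  · exact key x (by have := hTN _ hx; omega)
  · exact key _ (by rw [e2] at hy'; omega)

theorem core_three (u e : ℕ) (he : 0 < e) (hu : e < u) (hue : u ≠ 2 * e) :
    HasRect 3 3 {v | v = 0 ∨ v = e ∨ v = u ∨ v = u + e ∨ v + e = u} := by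
  refine ⟨![![(u : ℤ), -(u + e : ℤ), e], ![(e - u : ℤ), 0, u - e], ![-(e : ℤ), u + e, -u]],
    ?_, ?_, ?_, ?_⟩
  · intro i j i' j'
    fin_cases i <;> fin_cases i' <;> fin_cases j <;> fin_cases j' <;> simp <;> omega
  · intro i
    fin_cases i <;> simp [Fin.sum_univ_three]
  · intro j
    fin_cases j <;> simp [Fin.sum_univ_three]
  · intro i j
    fin_cases i <;> fin_cases j <;> simp <;> omega

set_option maxHeartbeats 4000000 in
theorem core_seven (z : ℕ) (hz : 10 ≤ z) :
    HasRect 3 7 {v | v = 0 ∨ v = 2 ∨ v = 4 ∨ v = 6 ∨ (z ≤ v + 3 ∧ v ≤ z + 3)} := by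
  refine ⟨![![2, -((z : ℤ) - 1), 4, -((z : ℤ) - 2), (z : ℤ) - 3, -6, (z : ℤ)],
      ![(z : ℤ) - 1, -2, (z : ℤ) - 2, -4, 6, -((z : ℤ) - 3), -(z : ℤ)],
      ![-((z : ℤ) + 1), (z : ℤ) + 1, -((z : ℤ) + 2), (z : ℤ) + 2, -((z : ℤ) + 3), (z : ℤ) + 3, 0]], ?_, ?_, ?_, ?_⟩
  · intro i j i' j'
    fin_cases i <;> fin_cases i' <;> fin_cases j <;> fin_cases j' <;> simp <;> omega
  · intro i
    fin_cases i <;> simp [Fin.sum_univ_succ] <;> ring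
  · intro j
    fin_cases j <;> simp [Fin.sum_univ_three] <;> ring
  · intro i j
    fin_cases i <;> fin_cases j <;> simp <;> omega

/-- The lower position of the pair with difference `d` in the double nest of order `k`. -/
def lo (k d : ℕ) : ℕ := if d % 2 = k % 2 then (3 * k + 2 - d) / 2 else (5 * k + 3 - d) / 2

theorem lo_spec (k d : ℕ) (h : d ≤ k) :
    (d % 2 = k % 2 ∧ 2 * lo k d + d = 3 * k + 2) ∨ (d % 2 ≠ k % 2 ∧ 2 * lo k d + d = 5 * k + 3) := by
  unfold lo
  split_ifs with hc
  · left; omega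
  · right; omega

theorem lo_disj (k d d' : ℕ) (h1 : d ≤ k) (h2 : d' ≤ k) (h3 : d ≠ d') :
    ∀ x ∈ trip (fun d => d) (lo k) d, x ∉ trip (fun d => d) (lo k) d' := by
  intro x hx hx'
  change x = d ∨ x = lo k d ∨ x = d + lo k d at hx
  change x = d' ∨ x = lo k d' ∨ x = d' + lo k d' at hx'
  have := lo_spec k d h1
  have := lo_spec k d' h2
  rcases lo_spec k d h1 with ⟨a, b⟩ | ⟨a, b⟩ <;> rcases lo_spec k d' h2 with ⟨a', b'⟩ | ⟨a', b'⟩ <;>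
    rcases hx with hx | hx | hx <;> rcases hx' with hx' | hx' | hx' <;> omega

theorem five_block (P p : ℕ) (hP : 2 < P) (hp : P + 1 < p) :
    HasRect 2 5 {v | v = 2 ∨ v = P ∨ v = P + 1 ∨ v = p ∨ v = p + 1} := by
  refine ⟨![![2, (P : ℤ), -(P + 1 : ℤ), (p : ℤ), -(p + 1 : ℤ)],
    ![-2, -(P : ℤ), (P + 1 : ℤ), -(p : ℤ), (p + 1 : ℤ)]], ?_, ?_, ?_, ?_⟩
  · intro i j i' j'
    fin_cases i <;> fin_cases i' <;> fin_cases j <;> fin_cases j' <;> simp <;> omega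
  · intro i
    fin_cases i <;> simp [Fin.sum_univ_succ] <;> ring
  · intro j
    fin_cases j <;> simp [Fin.sum_univ_two]
  · intro i j
    fin_cases i <;> fin_cases j <;> simp <;> omega

theorem odd_large (m n k : ℕ) (hm : m % 2 = 1) (hn : n % 2 = 1) (hm3 : 3 ≤ m) (hmn : m ≤ n)
    (h4 : m % 4 = 3 ∨ n % 4 = 3) (hk : 2 * k + 4 = m + n) (hk6 : 6 ≤ k) :
    HasRect m n {x | 2 * x + 1 ≤ m * n} := by
  have hz := lo_spec k 0 (by omega)
  have hcore := core_seven (lo k 0) (by omega)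
  refine assemble m n 7 (3 * k + 2) _ ((Finset.Icc 1 k) \ {2, 4, 6}) (fun d => d) (lo k)
    hm hn hm3 (by omega) (by norm_num) (by omega) h4 hcore ?_ ?_ ?_ ?_ ?_ ?_ (by omega)
  · intro x hx
    change x = 0 ∨ x = 2 ∨ x = 4 ∨ x = 6 ∨ _ at hx
    omega
  · intro d hd
    simp only [Finset.mem_sdiff, Finset.mem_Icc] at hd
    have := lo_spec k d hd.1.2
    refine ⟨hd.1.1, ?_, ?_⟩
    · omega
    · show d ≠ lo k d
      omega
  · intro d hd
    simp only [Finset.mem_sdiff, Finset.mem_Icc] at hd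
    have := lo_spec k d hd.1.2
    show d + lo k d < _
    omega
  · intro d hd d' hd' hne
    simp only [Finset.mem_sdiff, Finset.mem_Icc] at hd hd'
    exact lo_disj k d d' hd.1.2 hd'.1.2 hne
  · intro d hd x hx hx'
    simp only [Finset.mem_sdiff, Finset.mem_Icc, Finset.mem_insert, Finset.mem_singleton,
      not_or] at hd
    change x = d ∨ x = lo k d ∨ x = d + lo k d at hx
    change x = 0 ∨ x = 2 ∨ x = 4 ∨ x = 6 ∨ _ at hx'
    have := lo_spec k d hd.1.2
    rcases this with ⟨a, b⟩ | ⟨a, b⟩ <;> rcases hz with ⟨a', b'⟩ | ⟨a', b'⟩ <;>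
      rcases hx with hx | hx | hx <;> omega
  · have : ({2, 4, 6} : Finset ℕ) ⊆ Finset.Icc 1 k := by
      intro x hx
      simp only [Finset.mem_insert, Finset.mem_singleton] at hx
      rw [Finset.mem_Icc]
      omega
    rw [Finset.card_sdiff_of_subset this, Nat.card_Icc]
    have : ({2, 4, 6} : Finset ℕ).card = 3 := rfl
    omega

/-- Small cases with a `3 × 3` core and explicit triples. -/
theorem odd_small (m n k u e : ℕ) (a b : ℕ → ℕ) (hm : m % 2 = 1) (hn : n % 2 = 1) (hm3 : 3 ≤ m)
    (hmn : m ≤ n) (h4 : m % 4 = 3 ∨ n % 4 = 3) (hk : 2 * k + 4 = m + n)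
    (he : 0 < e) (hu : e < u) (hue : u ≠ 2 * e) (hlt0 : u + e < 3 * k + 2)
    (hpos : ∀ d ∈ Finset.range (k - 1), 0 < a d ∧ 0 < b d ∧ a d ≠ b d)
    (hlt : ∀ d ∈ Finset.range (k - 1), a d + b d < 3 * k + 2)
    (hdisj : ∀ d ∈ Finset.range (k - 1), ∀ d' ∈ Finset.range (k - 1), d ≠ d' →
      ∀ x ∈ ({a d, b d, a d + b d} : Finset ℕ), x ∉ ({a d', b d', a d' + b d'} : Finset ℕ))
    (hcd : ∀ d ∈ Finset.range (k - 1), ∀ x ∈ ({a d, b d, a d + b d} : Finset ℕ),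
      ¬ (x = 0 ∨ x = e ∨ x = u ∨ x = u + e ∨ x + e = u)) :
    HasRect m n {x | 2 * x + 1 ≤ m * n} := by
  have hmem : ∀ d x, x ∈ trip a b d → x ∈ ({a d, b d, a d + b d} : Finset ℕ) := by
    intro d x hx
    simpa [trip] using hx
  refine assemble m n 3 (3 * k + 2) _ (Finset.range (k - 1)) a b
    hm hn hm3 (by omega) (by norm_num) (by omega) h4 (core_three u e he hu hue) ?_ hpos hlt ?_ ?_ ?_
    (by omega)
  · intro x hx
    change x = 0 ∨ x = e ∨ x = u ∨ x = u + e ∨ x + e = u at hx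
    omega
  · intro d hd d' hd' hne x hx hx'
    exact hdisj d hd d' hd' hne x (hmem _ _ hx) (hmem _ _ hx')
  · intro d hd x hx
    exact hcd d hd x (hmem _ _ hx)
  · rw [Finset.card_range]
    omega

theorem three_five : HasRect 3 5 {x | 2 * x + 1 ≤ 3 * 5} := by
  refine ⟨![![-7, -5, 5, 4, 3], ![0, -1, -2, 2, 1], ![7, 6, -3, -6, -4]],
    by decide, by decide, by decide, ?_⟩
  have : ∀ i j, 2 * ((![![-7, -5, 5, 4, 3], ![0, -1, -2, 2, 1], ![7, 6, -3, -6, -4]] :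
      Fin 3 → Fin 5 → ℤ) i j).natAbs + 1 ≤ 3 * 5 := by decide
  exact this

theorem odd_both_one (m n k : ℕ) (hm : m % 4 = 1) (hn : n % 4 = 1) (hm3 : 3 ≤ m) (hn3 : 3 ≤ n)
    (hk : 2 * k + 4 = m + n) :
    HasRect m n {x | 2 * x + 1 ≤ m * n} := by
  obtain ⟨q, rfl⟩ : ∃ q, m = 3 + (2 + 2 * (2 * q)) := ⟨(m - 5) / 4, by omega⟩
  obtain ⟨p, rfl⟩ : ∃ p, n = 5 + 4 * p := ⟨(n - 5) / 4, by omega⟩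
  have hz := lo_spec k 0 (by omega)
  have hP := lo_spec k 1 (by omega)
  set z := lo k 0 with hzdef
  set P := lo k 1 with hPdef
  have hrange : ∀ d ∈ Finset.Icc 3 k, 3 ≤ d ∧ d ≤ k := fun d hd => Finset.mem_Icc.1 hd
  obtain ⟨S, T, hS, hT, hST, hSD, hTD⟩ := triple_split (fun d => d) (lo k) (Finset.Icc 3 k)
    (1 + 2 * p) (2 * q) (by rw [Nat.card_Icc]; omega)
    (by
      intro d hd
      have h := hrange d hd
      have := lo_spec k d h.2
      refine ⟨by show 0 < d; omega, by omega, ?_⟩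
      show d ≠ lo k d
      omega)
    (fun d hd d' hd' hne => lo_disj k d d' (hrange d hd).2 (hrange d' hd').2 hne)
  have hcore := core_three z 1 (by omega) (by omega) (by omega)
  have hfive := five_block P (3 * k + 2) (by omega) (by omega)
  have hQ1 := quad_any 1 0 (3 * k + 4) 2 (4 * p) (by norm_num) (by omega) (by omega)
  have hQ2 := quad_any 1 0 (3 * k + 4 + 2 * (4 * p) / 2) (2 * (2 * q)) (2 + 4 * p) (by norm_num)
    (by omega) (by omega)
  -- facts about members of the triples
  have key : ∀ x, (∃ d ∈ Finset.Icc 3 k, x ∈ trip (fun d => d) (lo k) d) →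
      x < 3 * k + 2 ∧ 3 ≤ x ∧ x ≠ z ∧ x ≠ z + 1 ∧ x + 1 ≠ z ∧ x ≠ P ∧ x ≠ P + 1 := by
    rintro x ⟨d, hd, hx⟩
    have h := hrange d hd
    change x = d ∨ x = lo k d ∨ x = d + lo k d at hx
    have := lo_spec k d h.2
    rcases this with ⟨a, b⟩ | ⟨a, b⟩ <;> rcases hz with ⟨a', b'⟩ | ⟨a', b'⟩ <;>
      rcases hP with ⟨a2, b2⟩ | ⟨a2, b2⟩ <;>
      rcases hx with hx | hx | hx <;> omega
  have h1 := hcore.hglue hS (by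
    intro x hx hx'
    have := key x (hSD x hx')
    change x = 0 ∨ x = 1 ∨ x = z ∨ x = z + 1 ∨ x + 1 = z at hx
    omega)
  have h2 := hfive.hglue hQ1 (by
    rintro x hx ⟨y, hy, hy', rfl⟩
    change _ = 2 ∨ _ = P ∨ _ = P + 1 ∨ _ = 3 * k + 2 ∨ _ = 3 * k + 2 + 1 at hx
    omega)
  have h3 := hT.hglue hQ2 (by
    rintro x hx ⟨y, hy, hy', rfl⟩
    have := key _ (hTD _ hx)
    omega)
  rw [show 3 + (2 + 4 * p) = 5 + 4 * p by omega] at h3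
  rw [show 3 + 2 * (1 + 2 * p) = 5 + 4 * p by omega] at h1
  have h4 := h2.vglue h3 (by
    rintro x (hx | ⟨y, hy, hy', rfl⟩) (hx' | ⟨y', hy1, hy1', e⟩)
    · have := key _ (hTD _ hx')
      change x = 2 ∨ x = P ∨ x = P + 1 ∨ x = 3 * k + 2 ∨ x = 3 * k + 2 + 1 at hx
      omega
    · change x = 2 ∨ x = P ∨ x = P + 1 ∨ x = 3 * k + 2 ∨ x = 3 * k + 2 + 1 at hx
      omega
    · have := key _ (hTD _ hx')
      omega
    · omega)
  have h5 := h1.vglue h4 (by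
    rintro x (hx | hx) ((hx' | ⟨y, hy, hy', rfl⟩) | (hx' | ⟨y, hy, hy', rfl⟩))
    · change x = 0 ∨ x = 1 ∨ x = z ∨ x = z + 1 ∨ x + 1 = z at hx
      change x = 2 ∨ x = P ∨ x = P + 1 ∨ x = 3 * k + 2 ∨ x = 3 * k + 2 + 1 at hx'
      rcases hz with ⟨a', b'⟩ | ⟨a', b'⟩ <;> rcases hP with ⟨a2, b2⟩ | ⟨a2, b2⟩ <;> omega
    · change _ = 0 ∨ _ = 1 ∨ _ = z ∨ _ = z + 1 ∨ _ + 1 = z at hx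
      omega
    · have := key _ (hTD _ hx')
      change x = 0 ∨ x = 1 ∨ x = z ∨ x = z + 1 ∨ x + 1 = z at hx
      omega
    · change _ = 0 ∨ _ = 1 ∨ _ = z ∨ _ = z + 1 ∨ _ + 1 = z at hx
      omega
    · have := key _ (hSD _ hx)
      change x = 2 ∨ x = P ∨ x = P + 1 ∨ x = 3 * k + 2 ∨ x = 3 * k + 2 + 1 at hx'
      omega
    · have := key _ (hSD _ hx)
      omega
    · exact hST x hx hx'
    · have := key _ (hSD _ hx)
      omega)
  refine h5.mono ?_
  have e1 : (3 + (2 + 2 * (2 * q))) * (5 + 4 * p) + 1 =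
      2 * (3 * k + 4 + 4 * p) + 2 * (2 * q * (2 + 4 * p)) := by
    have : k = 3 + 2 * q + 2 * p := by omega
    subst this
    ring
  have e2 : 2 * (2 * q) * (2 + 4 * p) / 2 = 2 * q * (2 + 4 * p) := by rw [mul_assoc 2]; omega
  rw [e2]
  have fin : ∀ x, x < 3 * k + 4 + 4 * p + 2 * q * (2 + 4 * p) →
      2 * x + 1 ≤ (3 + (2 + 2 * (2 * q))) * (5 + 4 * p) := by
    intro x hx
    omega
  rintro x ((hx | hx) | ((hx | ⟨y, hy, hy', rfl⟩) | (hx | ⟨y, hy, hy', rfl⟩))) <;> refine fin _ ?_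
  · change x = 0 ∨ x = 1 ∨ x = z ∨ x = z + 1 ∨ x + 1 = z at hx
    omega
  · have := key _ (hSD _ hx)
    omega
  · change x = 2 ∨ x = P ∨ x = P + 1 ∨ x = 3 * k + 2 ∨ x = 3 * k + 2 + 1 at hx
    omega
  · omega
  · have := key _ (hTD _ hx)
    omega
  · omega

theorem odd_rect (m n : ℕ) (hm : m % 2 = 1) (hn : n % 2 = 1) (hm3 : 3 ≤ m) (hmn : m ≤ n) :
    HasRect m n {x | 2 * x + 1 ≤ m * n} := by
  obtain ⟨k, hk⟩ : ∃ k, 2 * k + 4 = m + n := ⟨(m + n) / 2 - 2, by omega⟩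
  by_cases h4 : m % 4 = 3 ∨ n % 4 = 3
  · by_cases h6 : 6 ≤ k
    · exact odd_large m n k hm hn hm3 hmn h4 hk h6
    · have : k = 1 ∨ k = 2 ∨ k = 3 ∨ k = 4 ∨ k = 5 := by omega
      rcases this with rfl | rfl | rfl | rfl | rfl
      · exact odd_small m n 1 3 1 (fun _ => 0) (fun _ => 0) hm hn hm3 hmn h4 hk (by decide)
          (by decide) (by decide) (by decide) (by decide) (by decide) (by decide) (by decide)
      · obtain ⟨rfl, rfl⟩ : m = 3 ∧ n = 5 := by omega
        exact three_five
      · exact odd_small m n 3 5 2 (fun d => [4, 1].getD d 0) (fun d => [6, 8].getD d 0)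
          hm hn hm3 hmn h4 hk (by decide)
          (by decide) (by decide) (by decide) (by decide) (by decide) (by decide) (by decide)
      · exact odd_small m n 4 5 4 (fun d => [6, 2, 3].getD d 0) (fun d => [7, 10, 8].getD d 0)
          hm hn hm3 hmn h4 hk (by decide)
          (by decide) (by decide) (by decide) (by decide) (by decide) (by decide) (by decide)
      · exact odd_small m n 5 6 2 (fun d => [7, 5, 3, 1].getD d 0)
          (fun d => [9, 10, 11, 12].getD d 0)
          hm hn hm3 hmn h4 hk (by decide)
          (by decide) (by decide) (by decide) (by decide) (by decide) (by decide) (by decide)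
  · exact odd_both_one m n k (by omega) (by omega) hm3 (by omega) hk

/-- Existence of magic rectangles. -/
theorem magic_rectangle (m n : ℕ) (hpar : m % 2 = n % 2) (hm3 : 3 ≤ m) (hmn : m ≤ n) :
    ∃ L : Fin m → Fin n → ℕ,
      (∀ i j i' j', L i j = L i' j' → i = i' ∧ j = j') ∧
      (∀ i j, 1 ≤ L i j ∧ L i j ≤ m * n) ∧
      (∀ i, 2 * ∑ j, L i j = n * (m * n + 1)) ∧ (∀ j, 2 * ∑ i, L i j = m * (m * n + 1)) := by
  obtain ⟨M, h1, h2, h3, h4⟩ : ∃ M : Fin m → Fin n → ℤ,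
      (∀ i j i' j', M i j = M i' j' → i = i' ∧ j = j') ∧
      (∀ i, ∑ j, M i j = 0) ∧ (∀ j, ∑ i, M i j = 0) ∧
      ∀ i j, ∃ y : ℕ, 1 ≤ y ∧ y ≤ m * n ∧ (2 * y : ℤ) = M i j + ((m * n : ℕ) : ℤ) + 1 := by
    rcases Nat.mod_two_eq_zero_or_one m with hm | hm
    · obtain ⟨M, h1, h2, h3, h4⟩ := even_rect m n hm (by omega) hm3 (by omega)
      refine ⟨M, h1, h2, h3, fun i j => ?_⟩
      obtain ⟨x, -, hx, e⟩ := h4 i j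
      have hev : m * n % 2 = 0 := by rw [Nat.mul_mod, hm]; simp
      generalize m * n = N at *
      exact ⟨((M i j + N + 1) / 2).toNat, by omega, by omega, by omega⟩
    · obtain ⟨M, h1, h2, h3, h4⟩ := odd_rect m n hm (by omega) hm3 (by omega)
      refine ⟨fun i j => 2 * M i j, fun i j i' j' e => h1 _ _ _ _ (by linarith), ?_, ?_, ?_⟩
      · intro i
        rw [← Finset.mul_sum, h2, mul_zero]
      · intro j
        rw [← Finset.mul_sum, h3, mul_zero]
      · intro i j
        beta_reduce
        have := h4 i j
        change 2 * (M i j).natAbs + 1 ≤ m * n at this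
        have hod : m * n % 2 = 1 := by rw [Nat.mul_mod, hm, ← hpar, hm]
        generalize m * n = N at *
        exact ⟨((2 * M i j + N + 1) / 2).toNat, by omega, by omega, by omega⟩
  choose L hL1 hL2 hL3 using h4
  refine ⟨L, ?_, fun i j => ⟨hL1 i j, hL2 i j⟩, ?_, ?_⟩
  · intro i j i' j' e
    apply h1
    have a := hL3 i j
    have b := hL3 i' j'
    rw [e] at a
    linarith
  · intro i
    have : (2 * ∑ j, (L i j : ℤ)) = n * (m * n + 1) := by
      rw [Finset.mul_sum, Finset.sum_congr rfl (fun j _ => hL3 i j)]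
      simp only [Finset.sum_add_distrib, h2 i]
      simp
      ring
    exact_mod_cast this
  · intro j
    have : (2 * ∑ i, (L i j : ℤ)) = m * (m * n + 1) := by
      rw [Finset.mul_sum, Finset.sum_congr rfl (fun i _ => hL3 i j)]
      simp only [Finset.sum_add_distrib, h3 j]
      simp
      ring
    exact_mod_cast this

theorem vertexSum_eq {V : Type*} [Fintype V] (G : SimpleGraph V) (f : Sym2 V → ℕ) (v : V) :
    vertexSum G f v = ∑ᶠ w ∈ G.neighborSet v, f s(v, w) := by
  unfold vertexSum
  symm
  refine finsum_mem_eq_of_bijOn (fun w => s(v, w)) ⟨?_, ?_, ?_⟩ (fun _ _ => rfl)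
  · intro w hw
    exact (G.mk'_mem_incidenceSet_iff).2 ⟨hw, Or.inl rfl⟩
  · intro a _ b _ h
    exact Sym2.congr_right.1 h
  · rintro e ⟨he, hv⟩
    obtain ⟨w, rfl⟩ := Sym2.mem_iff_exists.1 hv
    exact ⟨w, he, rfl⟩

open Classical in
theorem vertexSum_eq_sum {V : Type*} [Fintype V] (G : SimpleGraph V) (f : Sym2 V → ℕ) (v : V) :
    vertexSum G f v = ∑ w, if G.Adj v w then f s(v, w) else 0 := by
  rw [vertexSum_eq, ← Finset.sum_filter]
  apply finsum_mem_eq_sum_of_inter_support_eq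
  ext w
  simp [SimpleGraph.mem_neighborSet]

theorem join_ll {V : Type*} (G : SimpleGraph V) (n : ℕ) (a b : V) :
    (joinEmpty G n).Adj (Sum.inl a) (Sum.inl b) ↔ G.Adj a b := by
  simp only [joinEmpty, SimpleGraph.fromRel_adj]
  constructor
  · rintro ⟨_, (⟨x, y, hx, hy, h⟩ | h) | (⟨x, y, hx, hy, h⟩ | h)⟩
    · cases hx; cases hy; exact h
    · simp at h
    · cases hx; cases hy; exact h.symm
    · simp at h
  · intro h
    exact ⟨fun e => h.ne (Sum.inl.inj e), Or.inl (Or.inl ⟨a, b, rfl, rfl, h⟩)⟩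

theorem join_lr {V : Type*} (G : SimpleGraph V) (n : ℕ) (a : V) (j : Fin n) :
    (joinEmpty G n).Adj (Sum.inl a) (Sum.inr j) := by
  simp [joinEmpty, SimpleGraph.fromRel_adj]

theorem join_rl {V : Type*} (G : SimpleGraph V) (n : ℕ) (a : V) (j : Fin n) :
    (joinEmpty G n).Adj (Sum.inr j) (Sum.inl a) := (join_lr G n a j).symm

theorem join_rr {V : Type*} (G : SimpleGraph V) (n : ℕ) (i j : Fin n) :
    ¬ (joinEmpty G n).Adj (Sum.inr i) (Sum.inr j) := by
  simp [joinEmpty, SimpleGraph.fromRel_adj]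

/-- The labeling of the join: `f` on the edges of `G`, `g` on the new edges. -/
def joinLabel {V : Type*} {n : ℕ} (f : Sym2 V → ℕ) (g : V → Fin n → ℕ) :
    Sym2 (V ⊕ Fin n) → ℕ :=
  Sym2.lift ⟨fun x y => match x, y with
    | Sum.inl a, Sum.inl b => f s(a, b)
    | Sum.inl a, Sum.inr j => g a j
    | Sum.inr j, Sum.inl a => g a j
    | Sum.inr _, Sum.inr _ => 0, by
      rintro (a | i) (b | j)
      · exact congrArg f Sym2.eq_swap
      · rfl
      · rfl
      · rfl⟩

theorem joinLabel_bij {V : Type*} [Fintype V] (G : SimpleGraph V) (n e N : ℕ) (f : Sym2 V → ℕ)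
    (g : V → Fin n → ℕ) (hf : Set.BijOn f G.edgeSet (Set.Icc 1 e))
    (hg : ∀ a j a' j', g a j = g a' j' → a = a' ∧ j = j')
    (hr : ∀ a j, e + 1 ≤ g a j ∧ g a j ≤ e + N)
    (hs : ∀ x, e + 1 ≤ x → x ≤ e + N → ∃ a j, g a j = x) :
    Set.BijOn (joinLabel f g) (joinEmpty G n).edgeSet (Set.Icc 1 (e + N)) := by
  have hcase : ∀ x ∈ (joinEmpty G n).edgeSet,
      (∃ a b, x = s(Sum.inl a, Sum.inl b) ∧ G.Adj a b) ∨
      (∃ a j, x = s(Sum.inl a, Sum.inr j)) := by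
    intro x
    induction x using Sym2.ind with
    | _ x y =>
      intro h
      rw [SimpleGraph.mem_edgeSet] at h
      rcases x with a | i <;> rcases y with b | j
      · exact Or.inl ⟨a, b, rfl, (join_ll G n a b).1 h⟩
      · exact Or.inr ⟨a, j, rfl⟩
      · exact Or.inr ⟨b, i, Sym2.eq_swap⟩
      · exact absurd h (join_rr G n i j)
  refine ⟨?_, ?_, ?_⟩
  · intro x hx
    rcases hcase x hx with ⟨a, b, rfl, h⟩ | ⟨a, j, rfl⟩
    · have := hf.mapsTo ((G.mem_edgeSet).2 h)
      change f s(a, b) ∈ _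
      rw [Set.mem_Icc] at this ⊢
      omega
    · have := hr a j
      change g a j ∈ _
      rw [Set.mem_Icc]
      omega
  · intro x hx y hy hxy
    rcases hcase x hx with ⟨a, b, rfl, h⟩ | ⟨a, j, rfl⟩ <;>
    rcases hcase y hy with ⟨a', b', rfl, h'⟩ | ⟨a', j', rfl⟩
    · have h0 : s(a, b) = s(a', b') := hf.injOn ((G.mem_edgeSet).2 h) ((G.mem_edgeSet).2 h') hxy
      exact congrArg (Sym2.map Sum.inl) h0
    · have h1 := hf.mapsTo ((G.mem_edgeSet).2 h)
      rw [Set.mem_Icc] at h1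
      have h2 := hr a' j'
      have h3 : f s(a, b) = g a' j' := hxy
      omega
    · have h1 := hf.mapsTo ((G.mem_edgeSet).2 h')
      rw [Set.mem_Icc] at h1
      have h2 := hr a j
      have h3 : g a j = f s(a', b') := hxy
      omega
    · obtain ⟨rfl, rfl⟩ := hg a j a' j' hxy
      rfl
  · intro x hx
    rw [Set.mem_Icc] at hx
    by_cases hxe : x ≤ e
    · obtain ⟨y, hy, rfl⟩ := hf.surjOn (Set.mem_Icc.2 ⟨hx.1, hxe⟩)
      induction y using Sym2.ind with
      | _ a b =>
        exact ⟨s(Sum.inl a, Sum.inl b), (join_ll G n a b).2 hy, rfl⟩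
    · obtain ⟨a, j, rfl⟩ := hs x (by omega) hx.2
      exact ⟨s(Sum.inl a, Sum.inr j), join_lr G n a j, rfl⟩

theorem joinLabel_sum_inl {V : Type*} [Fintype V] (G : SimpleGraph V) (n : ℕ) (f : Sym2 V → ℕ)
    (g : V → Fin n → ℕ) (a : V) :
    vertexSum (joinEmpty G n) (joinLabel f g) (Sum.inl a) = vertexSum G f a + ∑ j, g a j := by
  classical
  rw [vertexSum_eq_sum, vertexSum_eq_sum, Fintype.sum_sum_type]
  congr 1
  · apply Finset.sum_congr rfl
    intro b _
    simp only [join_ll]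
    rfl
  · apply Finset.sum_congr rfl
    intro j _
    rw [if_pos (join_lr G n a j)]
    rfl

theorem joinLabel_sum_inr {V : Type*} [Fintype V] (G : SimpleGraph V) (n : ℕ) (f : Sym2 V → ℕ)
    (g : V → Fin n → ℕ) (j : Fin n) :
    vertexSum (joinEmpty G n) (joinLabel f g) (Sum.inr j) = ∑ a, g a j := by
  classical
  rw [vertexSum_eq_sum, Fintype.sum_sum_type]
  have : ∑ i : Fin n, (if (joinEmpty G n).Adj (Sum.inr j) (Sum.inr i) then
      joinLabel f g s(Sum.inr j, Sum.inr i) else 0) = 0 :=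
    Finset.sum_eq_zero fun i _ => if_neg (join_rr G n j i)
  rw [this, add_zero]
  apply Finset.sum_congr rfl
  intro b _
  rw [if_pos (join_rl G n b j)]
  rfl

theorem vertexSum_pos {V : Type*} [Fintype V] (G : SimpleGraph V) (e : ℕ) (f : Sym2 V → ℕ)
    (hf : Set.BijOn f G.edgeSet (Set.Icc 1 e)) (a b : V) (h : G.Adj a b) :
    0 < vertexSum G f a := by
  classical
  rw [vertexSum_eq_sum]
  have h1 := hf.mapsTo ((G.mem_edgeSet).2 h)
  rw [Set.mem_Icc] at h1
  refine Finset.sum_pos' (fun _ _ => Nat.zero_le _) ⟨b, Finset.mem_univ _, ?_⟩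
  rw [if_pos h]
  omega

theorem join_upper {V : Type*} [Fintype V] (G : SimpleGraph V) (hG : G.Connected)
    (m n : ℕ) (hm : Fintype.card V = m) (hm3 : 3 ≤ m) (hn : 1 ≤ n)
    (hpar : m % 2 = n % 2) (hnm : m ≤ n) (f : Sym2 V → ℕ) (hf : IsLocalAntimagic G f) :
    ∃ F, IsLocalAntimagic (joinEmpty G n) F ∧
      colorCount (joinEmpty G n) F = colorCount G f + 1 := by
  obtain ⟨L, hL1, hL2, hL3, hL4⟩ := magic_rectangle m n hpar hm3 hnm
  obtain ⟨hb, hadj⟩ := hf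
  set e := G.edgeSet.ncard with he
  let idx : V ≃ Fin m := Fintype.equivFinOfCardEq hm
  set g : V → Fin n → ℕ := fun a j => e + L (idx a) j with hgdef
  have hsurj : ∀ x, e + 1 ≤ x → x ≤ e + m * n → ∃ a j, g a j = x := by
    intro x h1 h2
    have hinj : Function.Injective (fun p : Fin m × Fin n => L p.1 p.2) := by
      rintro ⟨i, j⟩ ⟨i', j'⟩ h
      obtain ⟨rfl, rfl⟩ := hL1 i j i' j' h
      rfl
    have himg : (Finset.univ.image (fun p : Fin m × Fin n => L p.1 p.2)) =
        Finset.Icc 1 (m * n) := by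
      apply Finset.eq_of_subset_of_card_le
      · intro y hy
        obtain ⟨p, -, rfl⟩ := Finset.mem_image.1 hy
        exact Finset.mem_Icc.2 (hL2 p.1 p.2)
      · rw [Finset.card_image_of_injective _ hinj]
        simp
    have hx : x - e ∈ Finset.Icc 1 (m * n) := Finset.mem_Icc.2 ⟨by omega, by omega⟩
    rw [← himg] at hx
    obtain ⟨p, -, hp⟩ := Finset.mem_image.1 hx
    refine ⟨idx.symm p.1, p.2, ?_⟩
    have hp' : L p.1 p.2 = x - e := hp
    simp only [hgdef, Equiv.apply_symm_apply, hp']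
    omega
  have hbij := joinLabel_bij G n e (m * n) f g hb
    (by
      intro a j a' j' h
      have h' : L (idx a) j = L (idx a') j' := Nat.add_left_cancel h
      obtain ⟨h1, h2⟩ := hL1 _ _ _ _ h'
      exact ⟨idx.injective h1, h2⟩)
    (by
      intro a j
      have := hL2 (idx a) j
      simp only [hgdef]
      omega) hsurj
  have hcard : (joinEmpty G n).edgeSet.ncard = e + m * n := by
    have h1 : (joinLabel f g '' (joinEmpty G n).edgeSet).ncard = (joinEmpty G n).edgeSet.ncard :=
      Set.ncard_image_of_injOn hbij.injOn
    rw [hbij.image_eq] at h1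
    rw [← h1, Set.ncard_eq_toFinset_card']
    simp
  obtain ⟨R, hR⟩ : ∃ R, ∀ i, ∑ j, L i j = R := by
    refine ⟨∑ j, L ⟨0, by omega⟩ j, fun i => ?_⟩
    have h1 := hL3 i
    have h2 := hL3 ⟨0, by omega⟩
    omega
  obtain ⟨C, hC⟩ : ∃ C, ∀ j, ∑ i, L i j = C := by
    refine ⟨∑ i, L i ⟨0, by omega⟩, fun i => ?_⟩
    have h1 := hL4 i
    have h2 := hL4 ⟨0, by omega⟩
    omega
  have hCR : C ≤ R := by
    have h1 := hL3 ⟨0, by omega⟩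
    have h2 := hL4 ⟨0, by omega⟩
    rw [hR] at h1
    rw [hC] at h2
    have := Nat.mul_le_mul_right (m * n + 1) hnm
    omega
  have hl : ∀ a, vertexSum (joinEmpty G n) (joinLabel f g) (Sum.inl a) =
      vertexSum G f a + (n * e + R) := by
    intro a
    rw [joinLabel_sum_inl, ← hR (idx a)]
    simp [hgdef, Finset.sum_add_distrib]
  have hrr : ∀ j, vertexSum (joinEmpty G n) (joinLabel f g) (Sum.inr j) = m * e + C := by
    intro j
    rw [joinLabel_sum_inr, ← hC j]
    simp only [hgdef, Finset.sum_add_distrib]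
    rw [Equiv.sum_comp idx (fun i => L i j)]
    simp [hm]
  have hlt : ∀ a, m * e + C < vertexSum G f a + (n * e + R) := by
    intro a
    have hnt : Nontrivial V := Fintype.one_lt_card_iff_nontrivial.1 (by omega)
    obtain ⟨b, hab⟩ := hG.preconnected.exists_adj_of_nontrivial a
    have h1 := vertexSum_pos G e f hb a b hab
    have := Nat.mul_le_mul_right e hnm
    omega
  refine ⟨joinLabel f g, ⟨by rw [hcard]; exact hbij, ?_⟩, ?_⟩
  · rintro (a | i) (b | j) h
    · rw [hl, hl]
      have := hadj a b ((join_ll G n a b).1 h)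
      omega
    · rw [hl, hrr]
      exact (hlt a).ne'
    · rw [hl, hrr]
      exact (hlt b).ne
    · exact absurd h (join_rr G n i j)
  · unfold colorCount
    have hrange : Set.range (vertexSum (joinEmpty G n) (joinLabel f g)) =
        insert (m * e + C) ((fun x => x + (n * e + R)) '' Set.range (vertexSum G f)) := by
      ext x
      constructor
      · rintro ⟨a | j, rfl⟩
        · exact Or.inr ⟨_, ⟨a, rfl⟩, (hl a).symm⟩
        · exact Or.inl (hrr j)
      · rintro (rfl | ⟨_, ⟨a, rfl⟩, rfl⟩)
        · exact ⟨Sum.inr ⟨0, by omega⟩, hrr _⟩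
        · exact ⟨Sum.inl a, hl a⟩
    rw [hrange, Set.ncard_insert_of_notMem _ (((Set.finite_range _).image _)),
      Set.ncard_image_of_injective _ (add_left_injective _)]
    rintro ⟨_, ⟨a, rfl⟩, h⟩
    exact (hlt a).ne' h

theorem join_lower {V : Type*} [Fintype V] (G : SimpleGraph V) (n : ℕ) (hn : 1 ≤ n)
    (F : Sym2 (V ⊕ Fin n) → ℕ) (hF : IsLocalAntimagic (joinEmpty G n) F) :
    G.Colorable (colorCount (joinEmpty G n) F - 1) := by
  classical
  set s := vertexSum (joinEmpty G n) F with hs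
  set c := s (Sum.inr ⟨0, by omega⟩) with hc
  have hfin : (Set.range s).Finite := Set.finite_range s
  let T : Finset ℕ := hfin.toFinset.erase c
  have hT : T.card = colorCount (joinEmpty G n) F - 1 := by
    have hmem : c ∈ hfin.toFinset := hfin.mem_toFinset.2 ⟨_, rfl⟩
    rw [Finset.card_erase_of_mem hmem, ← Set.ncard_eq_toFinset_card _ hfin]
    rfl
  let col : G.Coloring T := SimpleGraph.Coloring.mk
    (fun a => ⟨s (Sum.inl a), Finset.mem_erase.2
      ⟨hF.2 _ _ (join_lr G n a _), hfin.mem_toFinset.2 ⟨_, rfl⟩⟩⟩)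
    (by
      intro a b hab h
      exact hF.2 _ _ ((join_ll G n a b).2 hab) (congrArg Subtype.val h))
  have := col.colorable
  rwa [Fintype.card_coe, hT] at this

theorem chiLA_join_eq_of_le {V : Type*} [Fintype V] (G : SimpleGraph V) (hG : G.Connected)
    (m n : ℕ) (hm : Fintype.card V = m) (hm3 : 3 ≤ m) (hn : 1 ≤ n)
    (hpar : m % 2 = n % 2) (hchi : G.chromaticNumber = (chiLA G : ℕ∞))
    (hnm : m ≤ n) :
    chiLA (joinEmpty G n) = chiLA G + 1 := by
  have hne : chiLA G ≠ 0 := by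
    intro h0
    rw [h0] at hchi
    have hcol : G.Colorable 0 :=
      SimpleGraph.chromaticNumber_le_iff_colorable.1 (le_of_eq hchi)
    obtain ⟨a⟩ := hG.nonempty
    obtain ⟨c⟩ := hcol
    exact (c a).elim0
  have hset : { k | ∃ f, IsLocalAntimagic G f ∧ colorCount G f = k }.Nonempty := by
    by_contra h
    rw [Set.not_nonempty_iff_eq_empty] at h
    apply hne
    unfold chiLA
    rw [h, Nat.sInf_empty]
  obtain ⟨f, hf, hfc⟩ := Nat.sInf_mem hset
  change colorCount G f = chiLA G at hfc
  obtain ⟨F, hF, hFc⟩ := join_upper G hG m n hm hm3 hn hpar hnm f hf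
  have hset' : { k | ∃ f, IsLocalAntimagic (joinEmpty G n) f ∧
      colorCount (joinEmpty G n) f = k }.Nonempty := ⟨_, F, hF, rfl⟩
  apply le_antisymm
  · exact Nat.sInf_le ⟨F, hF, by rw [hFc, hfc]⟩
  · obtain ⟨F', hF', hFc'⟩ := Nat.sInf_mem hset'
    change colorCount (joinEmpty G n) F' = chiLA (joinEmpty G n) at hFc'
    have h1 := (join_lower G n hn F' hF').chromaticNumber_le
    rw [hchi, hFc'] at h1
    have h2 : chiLA G ≤ chiLA (joinEmpty G n) - 1 := by exact_mod_cast h1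
    omega
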